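/- Let R be a ring and let K and L be ℤ-graded chain complexes of R-modules. Suppose f : K → L and g : L → K are chain maps with f ∘ g = id_L, and suppose h = (h_n : K_n → K_{n+1})_{n ∈ ℤ} is a collection of R-linear maps satisfying g_n ∘ f_n − id_{K_n} = ∂_{n+1} ∘ h_n + h_{n−1} ∘ ∂_n for all n (so h is a chain homotopy between g ∘ f and id_K). Then there exists a collection h' = (h'_n : K_n → K_{n+1})_{n ∈ ℤ} such that g_n ∘ f_n − id_{K_n} = ∂_{n+1} ∘ h'_n + h'_{n−1} ∘ ∂_n for all n, and additionally h'_{n+1} ∘ h'_n = 0, f_{n+1} ∘ h'_n = 0, and h'_n ∘ g_n = 0 for all n; that is, (f, g, h') is a strong deformation retraction of K onto L. -/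

import Mathlib

/-!
Write `p = g f - 1`. Since `f g = 1`, `p` is a chain map with `p p = -p`, `f p = 0` and
`p g = 0`. Conjugating the homotopy, `k = p h p` satisfies `∂ k + k ∂ = p³ = p`, and now
`f k = 0`, `k g = 0`, `p k = k p = -k`. Put `h' = -k ∂ k`. From `∂ k ∂ = ∂ p = p ∂` one gets
`∂ h' + h' ∂ = -(p ∂ k + k ∂ p) = -(∂ p k + k p ∂) = ∂ k + k ∂ = p`, and
`∂ k k ∂ = (p - k ∂) k ∂ = -k ∂ - k p ∂ = 0` gives `h' h' = k (∂ k k ∂) k = 0`.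
-/

/-- Given chain maps `f : K → L`, `g : L → K` between ℤ-graded chain
complexes of `R`-modules with `f ∘ g = id_L`, and a chain homotopy `h` between `g ∘ f`
and `id_K`, there is another chain homotopy `h'` between `g ∘ f` and `id_K` which moreover
satisfies `h' ∘ h' = 0`, `f ∘ h' = 0` and `h' ∘ g = 0`; that is, `(f, g, h')` is a strong
deformation retraction of `K` onto `L`. -/
theorem exists_strong_deformation_retraction_of_homotopy_retraction
    (R : Type*) [Ring R] (K L : ChainComplex (ModuleCat R) ℤ)
    (f : K ⟶ L) (g : L ⟶ K)
    (hfg : ∀ (n : ℤ) (y : L.X n), f.f n (g.f n y) = y)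
    (h : ∀ n : ℤ, K.X n →ₗ[R] K.X (n + 1))
    (hh : ∀ (n : ℤ) (x : K.X (n + 1)),
      g.f (n + 1) (f.f (n + 1) x) - x
        = K.d (n + 1 + 1) (n + 1) (h (n + 1) x) + h n (K.d (n + 1) n x)) :
    ∃ h' : ∀ n : ℤ, K.X n →ₗ[R] K.X (n + 1),
      (∀ (n : ℤ) (x : K.X (n + 1)),
        g.f (n + 1) (f.f (n + 1) x) - x
          = K.d (n + 1 + 1) (n + 1) (h' (n + 1) x) + h' n (K.d (n + 1) n x)) ∧
      (∀ (n : ℤ) (x : K.X n), h' (n + 1) (h' n x) = 0) ∧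
      (∀ (n : ℤ) (x : K.X n), f.f (n + 1) (h' n x) = 0) ∧
      (∀ (n : ℤ) (y : L.X n), h' n (g.f n y) = 0) := by
  let p : ∀ n : ℤ, K.X n →ₗ[R] K.X n := fun n => (g.f n).hom ∘ₗ (f.f n).hom - LinearMap.id
  have p_def (n : ℤ) (x : K.X n) : p n x = g.f n (f.f n x) - x := rfl
  have fp (n : ℤ) (x : K.X n) : f.f n (p n x) = 0 := by
    rw [p_def, map_sub, hfg, sub_self]
  have pg (n : ℤ) (y : L.X n) : p n (g.f n y) = 0 := by
    rw [p_def, hfg, sub_self]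
  have pp (n : ℤ) (x : K.X n) : p n (p n x) = -p n x := by
    rw [p_def n (p n x), fp, map_zero, zero_sub]
  have f_comm (i j : ℤ) (x : K.X i) : f.f j (K.d i j x) = L.d i j (f.f i x) :=
    (CategoryTheory.ConcreteCategory.congr_hom (f.comm i j) x).symm
  have g_comm (i j : ℤ) (y : L.X i) : g.f j (L.d i j y) = K.d i j (g.f i y) :=
    (CategoryTheory.ConcreteCategory.congr_hom (g.comm i j) y).symm
  have dp (i j : ℤ) (x : K.X i) : K.d i j (p i x) = p j (K.d i j x) := by
    rw [p_def, p_def, map_sub, f_comm, g_comm]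
  have dd (i j l : ℤ) (x : K.X i) : K.d j l (K.d i j x) = 0 :=
    CategoryTheory.ConcreteCategory.congr_hom (K.d_comp_d i j l) x
  let k : ∀ n : ℤ, K.X n →ₗ[R] K.X (n + 1) := fun n => p (n + 1) ∘ₗ h n ∘ₗ p n
  have k_def (n : ℤ) (x : K.X n) : k n x = p (n + 1) (h n (p n x)) := rfl
  have fk (n : ℤ) (x : K.X n) : f.f (n + 1) (k n x) = 0 := fp _ _
  have kg (n : ℤ) (y : L.X n) : k n (g.f n y) = 0 := by
    rw [k_def, pg, map_zero, map_zero]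
  have pk (n : ℤ) (x : K.X n) : p (n + 1) (k n x) = -k n x := pp _ _
  have kp (n : ℤ) (x : K.X n) : k n (p n x) = -k n x := by
    rw [k_def, pp, map_neg, map_neg, k_def]
  have hk (n : ℤ) (x : K.X (n + 1)) :
      K.d (n + 1 + 1) (n + 1) (k (n + 1) x) + k n (K.d (n + 1) n x) = p (n + 1) x := by
    rw [k_def, k_def, dp (n + 1 + 1), ← dp (n + 1) n, ← map_add, ← hh, ← p_def, pp, pp, neg_neg]
  have dkd (n : ℤ) (x : K.X (n + 1)) :
      K.d (n + 1) n (k n (K.d (n + 1) n x)) = p n (K.d (n + 1) n x) := by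
    rw [← dp, ← hk, map_add, dd, zero_add]
  have dkkd (n : ℤ) (x : K.X (n + 1)) :
      K.d (n + 1 + 1) (n + 1) (k (n + 1) (k n (K.d (n + 1) n x))) = 0 := by
    rw [eq_sub_of_add_eq (hk n _), dkd, pk, kp, sub_self]
  refine ⟨fun n => -(k n ∘ₗ (K.d (n + 1) n).hom ∘ₗ k n), ?_, ?_, ?_, ?_⟩
  · intro n x
    change p (n + 1) x = K.d (n + 1 + 1) (n + 1)
        (-k (n + 1) (K.d (n + 1 + 1) (n + 1) (k (n + 1) x)))
      + -k n (K.d (n + 1) n (k n (K.d (n + 1) n x)))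
    rw [map_neg, dkd, dkd, kp, ← dp, pk, map_neg, neg_neg, neg_neg, hk]
  · intro n x
    change -k (n + 1) (K.d (n + 1 + 1) (n + 1) (k (n + 1)
      (-k n (K.d (n + 1) n (k n x))))) = 0
    rw [map_neg, map_neg, dkkd, neg_zero, map_zero, neg_zero]
  · intro n x
    change f.f (n + 1) (-k n (K.d (n + 1) n (k n x))) = 0
    rw [map_neg, fk, neg_zero]
  · intro n y
    change -k n (K.d (n + 1) n (k n (g.f n y))) = 0
    rw [kg, map_zero, map_zero, neg_zero]
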